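/- arXiv:2009.11670 — 4 statements merged into one kernel-verified Lean document; each statement's English description precedes it below -/
import Mathlib

section
/- Let X be a topological space, n and k natural numbers, and P a partition of Fin n (a Finpartition of the full finset of Fin n) with exactly k blocks. Then the subspace F(X,P) = {x : Fin n → X | for all i j, x i = x j if and only if i and j lie in the same block of P} of the product space Fin n → X is homeomorphic to the ordered configuration space F(X,k) = {y : Fin k → X | y is injective}, endowed with the subspace topology of the product topology. -/
/-- For a topological space `X` and a partition `P` of `Fin n` with exactly `k`
blocks, the subspace `F(X, P)` of `Fin n → X` of tuples whose coordinates `i, j` coincide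
exactly when `i` and `j` lie in the same block of `P` is homeomorphic to the ordered
configuration space `F(X, k)` of injective tuples `Fin k → X`. -/
theorem stmt1 (X : Type*) [TopologicalSpace X] (n k : ℕ)
    (P : Finpartition (Finset.univ : Finset (Fin n))) (hP : P.parts.card = k) :
    Nonempty
      (({x : Fin n → X // ∀ i j, x i = x j ↔ ∃ s ∈ P.parts, i ∈ s ∧ j ∈ s}) ≃ₜ
        ({y : Fin k → X // Function.Injective y})) := by
  classical
  obtain ⟨q, hq, hs⟩ : ∃ q : Fin n → Fin k,
      (∀ i j, q i = q j ↔ ∃ s ∈ P.parts, i ∈ s ∧ j ∈ s) ∧ Function.Surjective q := by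
    let e : P.parts ≃ Fin k := P.parts.equivFinOfCardEq hP
    refine ⟨fun i => e ⟨P.part i, P.part_mem.2 (Finset.mem_univ i)⟩, fun i j => ?_, fun a => ?_⟩
    · rw [e.apply_eq_iff_eq, Subtype.mk.injEq, ← P.mem_part_iff_exists,
        P.mem_part_iff_part_eq_part (Finset.mem_univ _) (Finset.mem_univ _)]
    · obtain ⟨i, hi⟩ := P.nonempty_of_mem_parts (e.symm a).2
      refine ⟨i, ?_⟩
      rw [← e.eq_symm_apply]
      exact Subtype.ext (P.part_eq_of_mem (e.symm a).2 hi)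
  obtain ⟨r, hr⟩ := hs.hasRightInverse
  refine ⟨{
    toFun := fun x => ⟨fun a => x.1 (r a), fun a b h => ?_⟩
    invFun := fun y => ⟨fun i => y.1 (q i), fun i j => ?_⟩
    left_inv := fun x => ?_
    right_inv := fun y => ?_
    continuous_toFun := ?_
    continuous_invFun := ?_ }⟩
  · have := (hq _ _).2 ((x.2 _ _).1 h)
    rwa [hr, hr] at this
  · rw [y.2.eq_iff, hq]
  · ext i
    exact (x.2 _ _).2 ((hq _ _).1 (hr (q i)))
  · ext a
    exact congrArg y.1 (hr a)
  · refine Continuous.subtype_mk (continuous_pi fun a => ?_) _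
    exact (continuous_apply (A := fun _ : Fin n => X) (r a)).comp continuous_subtype_val
  · refine Continuous.subtype_mk (continuous_pi fun i => ?_) _
    exact (continuous_apply (A := fun _ : Fin k => X) (q i)).comp continuous_subtype_val
end

section
/- Let X be a Hausdorff (T2) topological space and n a natural number. Let F(X,n) = {f : Fin n → X | f is injective} with the subspace topology of the product topology, acted on by Equiv.Perm (Fin n) via (σ • f)(i) = f(σ⁻¹ i), and let B(X,n) be the quotient topological space of F(X,n) by the orbit equivalence relation of this action. Then the quotient map F(X,n) → B(X,n) is a covering map. -/
/-- The ordered configuration space `F(X,n)` of `n` distinct labeled points in `X`,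
topologized as a subspace of the product `Fin n → X`. -/
def ConfSpace (X : Type*) (n : ℕ) : Type _ := {f : Fin n → X // Function.Injective f}

instance (X : Type*) [TopologicalSpace X] (n : ℕ) : TopologicalSpace (ConfSpace X n) :=
  instTopologicalSpaceSubtype

/-- The symmetric group `𝔖_n = Equiv.Perm (Fin n)` acts on `F(X,n)` by permuting the
coordinates: `(σ • f) i = f (σ⁻¹ i)`. -/
instance confSpaceMulAction (X : Type*) (n : ℕ) :
    MulAction (Equiv.Perm (Fin n)) (ConfSpace X n) where
  smul σ f := ⟨f.1 ∘ ⇑σ⁻¹, f.2.comp (Equiv.injective _)⟩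
  one_smul f := Subtype.ext (by
    show f.1 ∘ ⇑(1 : Equiv.Perm (Fin n))⁻¹ = f.1
    ext i
    simp)
  mul_smul σ τ f := Subtype.ext (by
    show f.1 ∘ ⇑(σ * τ)⁻¹ = (f.1 ∘ ⇑τ⁻¹) ∘ ⇑σ⁻¹
    ext i
    simp [mul_inv_rev, Function.comp])

/-- For a Hausdorff space `X`, the quotient map from the ordered
configuration space `F(X,n)` to the unordered configuration space
`B(X,n) = F(X,n)/𝔖_n` is a covering map. -/
theorem stmt10 (X : Type*) [TopologicalSpace X] [T2Space X] (n : ℕ) :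
    IsCoveringMap
      (Quotient.mk (MulAction.orbitRel (Equiv.Perm (Fin n)) (ConfSpace X n))) := by
  suffices H : IsQuotientCoveringMap
      (Quotient.mk (MulAction.orbitRel (Equiv.Perm (Fin n)) (ConfSpace X n)))
      (Equiv.Perm (Fin n)) from H.isCoveringMap
  refine (isQuotientCoveringMap_iff ..).mpr
    ⟨isQuotientMap_quotient_mk', ⟨fun σ => ?_⟩, Quotient.eq'', fun e => ?_⟩
  · refine Continuous.subtype_mk (f := fun f : ConfSpace X n => f.1 ∘ ⇑σ⁻¹) ?_ _
    have h : Continuous (fun f : ConfSpace X n => f.1) := continuous_subtype_val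
    exact continuous_pi fun i => (continuous_apply _).comp h
  · obtain ⟨U, hU, hd⟩ := (Set.finite_range e.1).t2_separation
    have h : Continuous (fun f : ConfSpace X n => f.1) := continuous_subtype_val
    refine ⟨⋂ i, {f : ConfSpace X n | f.1 i ∈ U (e.1 i)}, ?_, ?_⟩
    · refine (isOpen_iInter_of_finite fun i => ?_).mem_nhds ?_
      · exact (hU _).2.preimage ((continuous_apply i).comp h)
      · exact Set.mem_iInter.2 fun i => (hU _).1
    · rintro σ ⟨_, ⟨f, hf, rfl⟩, hg⟩
      ext1 i
      have h1 : f.1 i ∈ U (e.1 i) := Set.mem_iInter.1 hf i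
      have h2 : f.1 (σ⁻¹ (σ i)) ∈ U (e.1 (σ i)) := Set.mem_iInter.1 hg (σ i)
      rw [show σ⁻¹ (σ i) = i from σ.symm_apply_apply i] at h2
      by_contra hne
      have hne' : e.1 (σ i) ≠ e.1 i := fun h => hne (e.2 h)
      exact Set.disjoint_left.1 (hd ⟨_, rfl⟩ ⟨_, rfl⟩ hne') h2 h1
end

section
/- Let X be a topological space, n a natural number, and q : Fin n → X an injective function. Consider the projection π : F(X,n+1) → F(X,n) sending an injective f : Fin (n+1) → X to its restriction f ∘ Fin.castSucc along the inclusion Fin n ↪ Fin (n+1). Then the fiber π⁻¹(q) = {f ∈ F(X,n+1) | f ∘ Fin.castSucc = q}, with the subspace topology, is homeomorphic to the subspace X \ {q(0),...,q(n−1)} = {x : X | x ∉ Set.range q}, via the map sending f to its value at the last element of Fin (n+1). -/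
/-- For a topological space `X` and an injective `q : Fin n → X`, the fiber
over `q` of the projection `F(X,n+1) → F(X,n)`, `f ↦ f ∘ Fin.castSucc`, is homeomorphic
to the complement `{x : X | x ∉ Set.range q}` of the configuration `q`, via evaluation at
the last element of `Fin (n+1)`. -/
theorem stmt11 (X : Type*) [TopologicalSpace X] (n : ℕ) (q : Fin n → X)
    (hq : Function.Injective q) :
    ∃ h : {f : {f : Fin (n + 1) → X // Function.Injective f} // f.1 ∘ Fin.castSucc = q} ≃ₜ
          {x : X // x ∉ Set.range q},
      ∀ f, (h f).1 = f.1.1 (Fin.last n) := by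
  refine ⟨{
    toFun := fun f => ⟨f.1.1 (Fin.last n), ?_⟩
    invFun := fun x => ⟨⟨Fin.snoc (α := fun _ => X) q x.1, ?_⟩, ?_⟩
    left_inv := ?_
    right_inv := ?_
    continuous_toFun := ?_
    continuous_invFun := ?_ }, fun f => rfl⟩
  · rintro ⟨i, hi⟩
    have h := congrFun f.2 i
    exact (Fin.castSucc_lt_last i).ne (f.1.2 (h.trans hi))
  · intro i j
    refine Fin.lastCases ?_ (fun i => ?_) i <;> refine Fin.lastCases ?_ (fun j => ?_) j
    · intro _; rfl
    · intro h
      simp only [Fin.snoc_last, Fin.snoc_castSucc] at h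
      exact (x.2 ⟨j, h.symm⟩).elim
    · intro h
      simp only [Fin.snoc_last, Fin.snoc_castSucc] at h
      exact (x.2 ⟨i, h⟩).elim
    · intro h
      simp only [Fin.snoc_castSucc] at h
      rw [hq h]
  · funext i
    simp
  · intro f
    apply Subtype.ext
    apply Subtype.ext
    funext i
    refine Fin.lastCases ?_ (fun i => ?_) i
    · simp
    · simp only [Fin.snoc_castSucc]
      exact (congrFun f.2 i).symm
  · intro x
    apply Subtype.ext
    simp
  · exact Continuous.subtype_mk ((continuous_apply (Fin.last n)).comp
      (continuous_subtype_val.comp continuous_subtype_val)) _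
  · refine Continuous.subtype_mk (Continuous.subtype_mk (continuous_pi fun i => ?_) _) _
    refine Fin.lastCases ?_ (fun i => ?_) i
    · simpa using continuous_subtype_val
    · simpa using continuous_const
end

section
/- Let G be a finite group and V a finite-dimensional complex representation of G (an object of FDRep ℂ G) whose character vanishes at every non-identity element, i.e., Tr(ρ_V(g)) = 0 for all g ≠ 1. Then the cardinality of G divides the dimension dim_ℂ V, and V is isomorphic as a representation of G to the direct sum of (dim_ℂ V)/|G| copies of the left regular representation of G, namely the representation of G on the function space G → ℂ where g acts by precomposition with left translation by g⁻¹. -/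
open Module

/-- The direct sum of `m` copies of the left regular representation of `G` over `ℂ`: the
representation of `G` on `Fin m → (G → ℂ)` where `g` acts on each copy of the function
space `G → ℂ` by precomposition with left translation by `g⁻¹`. -/
def regRepPow (G : Type) [Group G] (m : ℕ) : Representation ℂ G (Fin m → G → ℂ) where
  toFun g :=
    { toFun := fun f i x => f i (g⁻¹ * x)
      map_add' := fun _ _ => rfl
      map_smul' := fun _ _ => rfl }
  map_one' := LinearMap.ext fun f => funext fun i => funext fun x => by simp
  map_mul' g h := LinearMap.ext fun f => funext fun i => funext fun x => by
    simp [mul_assoc]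

open scoped MonoidAlgebra in
lemma hom_finrank_aux {G : Type} [Group G] [Fintype G] {K M : Type}
    [AddCommGroup K] [Module ℂ K] [Module ℂ[G] K] [IsScalarTower ℂ ℂ[G] K] [FiniteDimensional ℂ K]
    [AddCommGroup M] [Module ℂ M] [Module ℂ[G] M] [IsScalarTower ℂ ℂ[G] M] [FiniteDimensional ℂ M] :
    (Nat.card G : ℂ)⁻¹ * ∑ g : G, (Representation.ofModule' (k := ℂ) (G := G) M).character g *
      (Representation.ofModule' (k := ℂ) (G := G) K).character g⁻¹ = finrank ℂ (K →ₗ[ℂ[G]] M) := by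
  have : Invertible (Nat.card G : ℂ) := invertibleOfNonzero (by simp)
  rw [Representation.card_inv_mul_sum_char_mul_char_eq_finrank]
  congr 1
  refine LinearEquiv.finrank_eq ?_
  exact 
  { toFun f := MonoidAlgebra.equivariantOfLinearOfComm f.toLinearMap (fun g v => LinearMap.congr_fun (f.isIntertwining' g) v)
    invFun f := ⟨f.restrictScalars ℂ, fun g => by
      ext v
      exact f.map_smul (MonoidAlgebra.of ℂ G g) v⟩
    map_add' _ _ := rfl
    map_smul' _ _ := rfl
    left_inv _ := rfl
    right_inv _ := rfl }

open scoped MonoidAlgebra in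
lemma core_step {G : Type} [Group G] [Fintype G] {M N : Type}
    [AddCommGroup M] [Module ℂ M] [Module ℂ[G] M] [IsScalarTower ℂ ℂ[G] M] [FiniteDimensional ℂ M]
    [AddCommGroup N] [Module ℂ N] [Module ℂ[G] N] [IsScalarTower ℂ ℂ[G] N] [FiniteDimensional ℂ N]
    (h : (Representation.ofModule' (k := ℂ) (G := G) M).character =
      (Representation.ofModule' (k := ℂ) (G := G) N).character)
    (f : M →ₗ[ℂ[G]] N) (hf : LinearMap.ker f ≠ ⊥) :
    ∃ f' : M →ₗ[ℂ[G]] N, LinearMap.ker f' < LinearMap.ker f := by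
  have : NeZero (Nat.card G : ℂ) := ⟨by simp⟩
  let K := LinearMap.ker f
  have : FiniteDimensional ℂ K :=
    inferInstanceAs (FiniteDimensional ℂ (K.restrictScalars ℂ))
  have hd : finrank ℂ (K →ₗ[ℂ[G]] M) = finrank ℂ (K →ₗ[ℂ[G]] N) := by
    have := hom_finrank_aux (G := G) (K := K) (M := M)
    rw [h, hom_finrank_aux] at this
    exact_mod_cast this.symm
  have : FiniteDimensional ℂ (K →ₗ[ℂ[G]] M) :=
    FiniteDimensional.of_injective (LinearMap.restrictScalarsₗ ℂ ℂ[G] K M ℂ)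
      (LinearMap.restrictScalars_injective ℂ)
  have : FiniteDimensional ℂ (K →ₗ[ℂ[G]] N) :=
    FiniteDimensional.of_injective (LinearMap.restrictScalarsₗ ℂ ℂ[G] K N ℂ)
      (LinearMap.restrictScalars_injective ℂ)
  let F : (K →ₗ[ℂ[G]] M) →ₗ[ℂ] (K →ₗ[ℂ[G]] N) :=
    { toFun α := f ∘ₗ α
      map_add' a b := by ext; simp
      map_smul' a b := by
        ext x
        exact (f.restrictScalars ℂ).map_smul a (b x) }
  have hF : ¬ Function.Surjective F := by
    intro hs
    have hi := (LinearMap.injective_iff_surjective_of_finrank_eq_finrank hd).2 hs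
    apply hf
    have h0 : K.subtype = 0 := hi (by ext x; simp [F, K])
    rw [eq_bot_iff]
    intro x hx
    exact congr($h0 ⟨x, hx⟩)
  simp only [Function.Surjective, not_forall, not_exists] at hF
  obtain ⟨ψ, hψ⟩ := hF
  obtain ⟨r, hr⟩ := IsSemisimpleModule.extension_property (LinearMap.range f).subtype
    (Submodule.subtype_injective _) LinearMap.id
  obtain ⟨α, hα⟩ := IsSemisimpleModule.lifting_property f.rangeRestrict
    f.surjective_rangeRestrict (r ∘ₗ ψ)
  obtain ⟨p, hp⟩ := IsSemisimpleModule.extension_property K.subtype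
    K.subtype_injective LinearMap.id
  have hp' : ∀ x : K, p x = x := fun x => congr($hp x)
  have hr' : ∀ x : M, (r (f x) : N) = f x := fun x =>
    congr(($hr ⟨f x, LinearMap.mem_range_self f x⟩ : N))
  have hα' : ∀ x, f (α x) = r (ψ x) := fun x => congr(($hα x : N))
  have hz : ∀ x : M, f x + (ψ - f ∘ₗ α) (p x) = 0 → f x = 0 := by
    intro x hx
    have := congr((r $hx : N))
    have h3 : ∀ y, (r (r (ψ y) : N) : N) = r (ψ y) := fun y => by rw [← hα', hr']
    simpa [hr', hα', h3] using this
  refine ⟨f + (ψ - f ∘ₗ α) ∘ₗ p, lt_of_le_of_ne (fun x hx => hz x hx) ?_⟩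
  intro he
  refine hψ α ?_
  ext x
  have hx : (x : M) ∈ LinearMap.ker (f + (ψ - f ∘ₗ α) ∘ₗ p) := by rw [he]; exact x.2
  have hx2 : f x = 0 := x.2
  simp [hp', hx2] at hx
  simpa [F] using (sub_eq_zero.1 hx).symm

open scoped MonoidAlgebra in
lemma core_inj {G : Type} [Group G] [Fintype G] {M N : Type}
    [AddCommGroup M] [Module ℂ M] [Module ℂ[G] M] [IsScalarTower ℂ ℂ[G] M] [FiniteDimensional ℂ M]
    [AddCommGroup N] [Module ℂ N] [Module ℂ[G] N] [IsScalarTower ℂ ℂ[G] N] [FiniteDimensional ℂ N]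
    (h : (Representation.ofModule' (k := ℂ) (G := G) M).character =
      (Representation.ofModule' (k := ℂ) (G := G) N).character) :
    ∃ f : M →ₗ[ℂ[G]] N, Function.Injective f := by
  have : IsArtinian ℂ[G] M := isArtinian_of_tower ℂ inferInstance
  obtain ⟨f, -, hf⟩ := WellFounded.has_min
    (InvImage.wf (fun f : M →ₗ[ℂ[G]] N => LinearMap.ker f) (wellFounded_lt)) Set.univ ⟨0, trivial⟩
  refine ⟨f, LinearMap.ker_eq_bot.1 ?_⟩
  by_contra hne
  obtain ⟨f', hf'⟩ := core_step h f hne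
  exact hf f' trivial hf'

lemma equiv_of_char {G : Type} [Group G] [Fintype G] {V W : Type}
    [AddCommGroup V] [Module ℂ V] [FiniteDimensional ℂ V]
    [AddCommGroup W] [Module ℂ W] [FiniteDimensional ℂ W]
    (ρ : Representation ℂ G V) (σ : Representation ℂ G W) (h : ρ.character = σ.character) :
    ∃ e : V ≃ₗ[ℂ] W, ∀ g v, e (ρ g v) = σ g (e v) := by
  have h1 : (Representation.ofModule' (k := ℂ) (G := G) ρ.asModule).character = ρ.character := by
    ext g
    unfold Representation.character
    congr 1
    ext v
    exact (ρ.asModuleEquiv_symm_map_rho g v).symm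
  have h2 : (Representation.ofModule' (k := ℂ) (G := G) σ.asModule).character = σ.character := by
    ext g
    unfold Representation.character
    congr 1
    ext v
    exact (σ.asModuleEquiv_symm_map_rho g v).symm
  obtain ⟨f, hf⟩ := core_inj (h1.trans (h.trans h2.symm))
  have hd : finrank ℂ V = finrank ℂ W := by
    have := congrFun h 1
    simpa using this
  let f₀ : V →ₗ[ℂ] W := σ.asModuleEquiv.toLinearMap ∘ₗ f.restrictScalars ℂ ∘ₗ
    ρ.asModuleEquiv.symm.toLinearMap
  have hf₀ : Function.Injective f₀ := hf
  refine ⟨LinearEquiv.ofInjectiveOfFinrankEq f₀ hf₀ hd, fun g v => ?_⟩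
  change f₀ (ρ g v) = σ g (f₀ v)
  change σ.asModuleEquiv (f (ρ.asModuleEquiv.symm (ρ g v))) =
    σ g (σ.asModuleEquiv (f (ρ.asModuleEquiv.symm v)))
  rw [Representation.asModuleEquiv_symm_map_rho, map_smul, Representation.asModuleEquiv_map_smul,
    Representation.asAlgebraHom_of]

lemma regRepPow_char (G : Type) [Group G] [Fintype G] (m : ℕ) (g : G) (hg : g ≠ 1) :
    (regRepPow G m).character g = 0 := by
  classical
  unfold Representation.character
  rw [LinearMap.trace_eq_matrix_trace ℂ (Pi.basis fun _ : Fin m => Pi.basisFun ℂ G)]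
  refine Finset.sum_eq_zero fun x _ => ?_
  obtain ⟨i, x⟩ := x
  simp [LinearMap.toMatrix_apply, regRepPow, Pi.basis_repr, Pi.basis_apply, hg]

theorem stmt14 (G : Type) [Group G] [Fintype G] (V : FDRep ℂ G)
    (h : ∀ g : G, g ≠ 1 → V.character g = 0) :
    Fintype.card G ∣ finrank ℂ V ∧
      Nonempty (V ≅ FDRep.of (regRepPow G (finrank ℂ V / Fintype.card G))) := by
  have hG : (Fintype.card G : ℂ) ≠ 0 := by simp
  have hdvd : Fintype.card G ∣ finrank ℂ V := by
    have : Invertible (Nat.card G : ℂ) := invertibleOfNonzero (by simp)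
    have h1 := V.average_char_eq_finrank_invariants
    rw [Finset.sum_eq_single 1 (fun g _ hg => h g hg) (by simp), FDRep.char_one,
      Nat.card_eq_fintype_card, inv_mul_eq_iff_eq_mul₀ hG] at h1
    exact ⟨_, by exact_mod_cast h1⟩
  refine ⟨hdvd, ?_⟩
  obtain ⟨e, he⟩ := equiv_of_char (V := V) V.ρ (regRepPow G (finrank ℂ V / Fintype.card G)) (by
    ext g
    by_cases hg : g = 1
    · subst hg
      rw [Representation.char_one, Representation.char_one]
      congr 1
      simp [Module.finrank_pi_fintype, Nat.div_mul_cancel hdvd]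
    · rw [regRepPow_char G _ g hg]
      exact h g hg)
  exact ⟨Action.mkIso (LinearEquiv.toFGModuleCatIso e) fun g => by
    ext v
    exact congrFun (congrFun (he g v) _) _⟩
end
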